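/- For an irreducible affine variety Y that is a component of V(F) for polynomials F = (f_1,...,f_m) on C^{n_1} × ... × C^{n_k}, with y a general smooth point of Y, and any subset I ⊂ {1,...,k}: dim π_I(Y) = dim ker DF(y) − dim ker DF_{I^c}(y), where DF(y) is the Jacobian of F at y and DF_{I^c}(y) is the submatrix of DF(y) consisting of the columns corresponding to variable groups not in I. -/

import Mathlib

/-!
Let `R` be the coordinate ring of `Y`, `K` its fraction field and `x` the family of coordinate
functions. The proof compares three descriptions of dimension.

* The intrinsic dimension of the image of `Y` under a family of regular functions is the
  transcendence degree `|B|` of the subalgebra generated by the family (`dimOf_ptSet`). More than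
  `|B|` affine forms are algebraically dependent on `Y`, so generic constants leave an empty slice.
  Conversely, distribute the forms among the groups in the way a transcendence basis `B` chosen
  among the coordinates is distributed. The Jacobian criterion shows that the generic coefficients
  together with the generic linear parts are algebraically independent
  (`algebraicIndependent_genFam`), so that by Chevalley and the Nullstellensatz a generic slice
  meets `Y`, and counting transcendence degrees makes it finite.
* In characteristic zero, the transcendence degree of a family is the `K`-dimension of the space of
  values of derivations of `K` on it (`finrank_derivSpace`).
* By the chain rule, the derivation values on `x` lie in `ker DF` over `K`. The rank of a matrix
  over `K` is at least its rank at any point, and equality holds off a proper closed subset. The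
  hypothesis that `ker DF` has dimension `dim Y` at one point therefore forces the derivation values
  to fill `ker DF` over `K` (`derivSpace_eq_ker`).

Restricting `ker DF` over `K` to the coordinates in `I` has kernel `ker DF_{Iᶜ}`, and its image
consists of the derivation values on these coordinates, whose dimension is `dim π_I(Y)`
(`finrank_derivSpace_add`). The formula then holds wherever `DF` and `DF_{Iᶜ}` have their generic
ranks. This locus is the complement of a hypersurface not containing `Y`. It is dense in `Y` for the
classical topology: for a Noether normalisation of `Y`, points over a sequence tending to the
image of `y₀` can be chosen to converge to `y₀` itself, by keeping small a function which vanishes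
at `y₀` and at no other point of its fibre (`exists_tendsto_algHom`).
-/

open scoped BigOperators

namespace MultiAff

variable {ι : Type*} [Fintype ι] [DecidableEq ι]

/-- Multiaffine space `ℂ^{n₁} × ⋯ × ℂ^{n_k}`, with grouped coordinates. -/
abbrev APt (n : ι → ℕ) := (i : ι) → Fin (n i) → ℂ

/-- Evaluation point of a polynomial in the grouped variables. -/
def flat {n : ι → ℕ} (x : APt n) : ((i : ι) × Fin (n i)) → ℂ := fun q => x q.1 q.2

/-- Algebraic subsets of multiaffine space. -/
def IsAlgebraicSet {n : ι → ℕ} (S : Set (APt n)) : Prop :=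
  ∃ F : Set (MvPolynomial ((i : ι) × Fin (n i)) ℂ),
    S = {x | ∀ f ∈ F, MvPolynomial.eval (flat x) f = 0}

/-- Irreducible multiaffine varieties. -/
def IsIrredVariety {n : ι → ℕ} (S : Set (APt n)) : Prop :=
  IsAlgebraicSet S ∧ S.Nonempty ∧
    ∀ A B : Set (APt n), IsAlgebraicSet A → IsAlgebraicSet B →
      S ⊆ A ∪ B → (S ⊆ A ∨ S ⊆ B)

/-- A property holds generically (on a dense open set) of a parameter. -/
def Generic {α : Type*} [TopologicalSpace α] (P : α → Prop) : Prop :=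
  ∃ U : Set α, IsOpen U ∧ Dense U ∧ ∀ a ∈ U, P a

/-- The zero set of a multiaffine slice given by `e i` affine forms
(coefficients and constant) in the `i`-th variable group. -/
def SliceZeros {n : ι → ℕ} {e : ι → ℕ}
    (L : (i : ι) → Fin (e i) → ((Fin (n i) → ℂ) × ℂ)) : Set (APt n) :=
  {x | ∀ (i : ι) (j : Fin (e i)), ∑ a, (L i j).1 a * x i a + (L i j).2 = 0}

/-- The multidimension of a multiaffine set. -/
def MDim {n : ι → ℕ} (S : Set (APt n)) : Set (ι → ℕ) :=
  {e | (∀ i, e i ≤ n i) ∧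
    Generic (fun L : (i : ι) → Fin (e i) → ((Fin (n i) → ℂ) × ℂ) =>
      (S ∩ SliceZeros L).Finite ∧ (S ∩ SliceZeros L).Nonempty)}

/-- The intrinsic dimension of a multiaffine set. -/
noncomputable def dimOf {n : ι → ℕ} (S : Set (APt n)) : ℕ :=
  sSup {m | ∃ e ∈ MDim S, ∑ i, e i = m}

/-- `dim π_I(S)` for the projection onto the coordinate blocks indexed by `I`. -/
noncomputable def dimProj {n : ι → ℕ} (I : Finset ι) (S : Set (APt n)) : ℕ :=
  dimOf ((fun (x : APt n) (i : {j // j ∈ I}) => x i.1) '' S)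

/-- The Jacobian matrix of a polynomial system at a point. -/
noncomputable def jac {n : ι → ℕ} {m : ℕ}
    (F : Fin m → MvPolynomial ((i : ι) × Fin (n i)) ℂ) (y : APt n) :
    Matrix (Fin m) ((i : ι) × Fin (n i)) ℂ :=
  fun a q => MvPolynomial.eval (flat y) (MvPolynomial.pderiv q (F a))

/-- The dimension of the kernel of a matrix (as a linear map). -/
noncomputable def kerDim {m : ℕ} {κ : Type*} [Fintype κ] [DecidableEq κ]
    (M : Matrix (Fin m) κ ℂ) : ℕ :=
  Module.finrank ℂ (LinearMap.ker (Matrix.toLin' M))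

/-- The Jacobian submatrix obtained by keeping only the columns of the variable
groups *not* in `I`. -/
noncomputable def jacCompl {n : ι → ℕ} {m : ℕ}
    (F : Fin m → MvPolynomial ((i : ι) × Fin (n i)) ℂ) (y : APt n) (I : Finset ι) :
    Matrix (Fin m) {q : (i : ι) × Fin (n i) // q.1 ∉ I} ℂ :=
  (jac F y).submatrix id Subtype.val

/-! ### Transcendence bases inside a family -/

section independence
open Algebra AlgebraicIndependent

/-- `B` indexes a transcendence basis, chosen among the members of the family `x`,
of the algebra generated by `x`. -/
structure IsFamBasis (k : Type*) [Field k] {A σ : Type*} [CommRing A] [Algebra k A]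
    (x : σ → A) (B : Set σ) : Prop where
  indep : AlgebraicIndependent k (fun b : B => x b)
  alg : ∀ q, IsAlgebraic (adjoin k (x '' B)) (x q)

section counting
variable {k A σ : Type*} [Field k] [CommRing A] [IsDomain A] [Algebra k A]

lemma exists_isFamBasis (x : σ → A) : ∃ B : Set σ, IsFamBasis k x B := by
  obtain ⟨J, hJ⟩ := (matroid k A).exists_isBasis (Set.range x) (Set.subset_univ _)
  choose s hs using fun z : J => hJ.subset z.2
  refine ⟨Set.range s, ?_, fun q => ?_⟩
  · have hJi : AlgebraicIndependent k (fun z : J => (z : A)) :=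
      matroid_indep_iff.mp hJ.indep
    have hmem : ∀ b : Set.range s, x b ∈ J := by
      rintro ⟨_, z, rfl⟩
      simp [hs]
    have hinj : Function.Injective (fun b : Set.range s => (⟨x b, hmem b⟩ : J)) := by
      rintro ⟨_, z, rfl⟩ ⟨_, w, rfl⟩ h
      have h' : z = w := by simpa [hs] using h
      exact Subtype.ext (congrArg s h')
    have h2 := hJi.comp _ hinj
    exact h2
  · have him : x '' Set.range s = J := by
      ext z
      constructor
      · rintro ⟨_, ⟨w, rfl⟩, rfl⟩
        simp [hs]
      · intro hz
        exact ⟨_, ⟨⟨z, hz⟩, rfl⟩, hs ⟨z, hz⟩⟩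
    rw [him]
    have h := hJ.subset_closure ⟨q, rfl⟩
    rw [matroid_closure_eq] at h
    exact h

/-- Exchange: an algebraically independent family inside the relative algebraic closure of a
finite set has at most as many members as this set. -/
lemma card_le_of_isAlgebraic {κ : Type*} [Fintype κ] {f : κ → A} (hf : AlgebraicIndependent k f)
    {s : Set A} (hs : s.Finite) (h : ∀ j, IsAlgebraic (adjoin k s) (f j)) :
    Fintype.card κ ≤ s.ncard := by
  have hi : (matroid k A).Indep (Set.range f) := hf.to_subtype_range
  have hsub : Set.range f ⊆ (matroid k A).closure s := by
    rintro _ ⟨j, rfl⟩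
    rw [matroid_closure_eq]
    exact h j
  have h1 : (Set.range f).encard ≤ s.encard := by
    calc (Set.range f).encard = (matroid k A).eRk (Set.range f) := hi.eRk_eq_encard.symm
      _ ≤ (matroid k A).eRk ((matroid k A).closure s) := Matroid.eRk_mono _ hsub
      _ = (matroid k A).eRk s := Matroid.eRk_closure_eq _ _
      _ ≤ s.encard := Matroid.eRk_le_encard _ _
  rw [← Set.image_univ, hf.injective.encard_image, ← hs.cast_ncard_eq] at h1
  simpa using h1

omit [IsDomain A] in
lemma isAlgebraic_map {A' : Type*} [CommRing A'] [IsDomain A'] [Algebra k A']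
    (f : A →ₐ[k] A') (hf : Function.Injective f) {s : Set A} {z : A}
    (hz : IsAlgebraic (adjoin k s) z) {t : Set A'} (ht : f '' s ⊆ t) :
    IsAlgebraic (adjoin k t) (f z) := by
  have hmap : ∀ w ∈ adjoin k s, f w ∈ adjoin k t := by
    intro w hw
    have : f w ∈ (adjoin k s).map f := ⟨w, hw, rfl⟩
    rw [AlgHom.map_adjoin] at this
    exact adjoin_mono ht this
  let g : adjoin k s →ₐ[k] adjoin k t :=
    (f.comp (adjoin k s).val).codRestrict _ fun w => hmap _ w.2
  have hg : Function.Injective g := fun a b hab => by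
    have : f a = f b := congrArg Subtype.val hab
    exact Subtype.ext (hf this)
  exact hz.ringHom_of_comp_eq (f := (g : adjoin k s →+* adjoin k t)) (g := (f : A →+* A'))
    hg (by ext; rfl)

end counting

/-! ### Derivations and transcendence degree in characteristic zero -/

section derivations
variable {k K : Type*} [Field k] [CharZero k] [Field K] [Algebra k K]

open scoped IntermediateField.algebraAdjoinAdjoin TensorProduct in
/-- In characteristic zero `K` is formally étale over the polynomial ring on a transcendence
basis, so derivations may be prescribed arbitrarily on such a basis. -/
lemma exists_derivation_of_isTranscendenceBasis {τ : Type*} {v : τ → K}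
    (hv : IsTranscendenceBasis k v) (w : τ → K) :
    ∃ D : Derivation k K K, ∀ i, D (v i) = w i := by
  let P := MvPolynomial τ k
  let S := adjoin k (Set.range v)
  let F := IntermediateField.adjoin k (Set.range v)
  let _ : Algebra P S := (hv.1.aevalEquiv : P →ₐ[k] S).toAlgebra
  let _ : Algebra P K := (MvPolynomial.aeval v : P →ₐ[k] K).toAlgebra
  have : IsScalarTower k P K := .of_algebraMap_eq' (MvPolynomial.aeval v : P →ₐ[k] K).comp_algebraMap.symm
  have : IsScalarTower P S K := .of_algebraMap_eq fun p => (hv.1.algebraMap_aevalEquiv p).symm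
  have : FormallyEtale P S :=
    FormallyEtale.of_equiv (AlgEquiv.ofBijective (Algebra.ofId P S) hv.1.aevalEquiv.bijective)
  have : FormallyEtale S F := .of_isLocalization (nonZeroDivisors _)
  have : Algebra.IsAlgebraic F K := hv.isAlgebraic_field
  have : FormallyEtale F K := FormallyEtale.of_isSeparable _ _
  have : FormallyEtale S K := .comp S F K
  have : FormallyEtale P K := .comp P S K
  let D₀ : Derivation k P K := MvPolynomial.mkDerivation k w
  let L : K ⊗[P] Ω[P⁄k] →ₗ[K] K :=
    TensorProduct.AlgebraTensorModule.lift
      ((LinearMap.lsmul K (Ω[P⁄k] →ₗ[P] K)).flip D₀.liftKaehlerDifferential)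
  let e := KaehlerDifferential.tensorKaehlerEquivOfFormallyEtale k P K
  refine ⟨(L.comp e.symm.toLinearMap).compDer (KaehlerDifferential.D k K), fun i => ?_⟩
  have hi : v i = algebraMap P K (MvPolynomial.X i) := (MvPolynomial.aeval_X v i).symm
  rw [hi]
  change L (e.symm (KaehlerDifferential.D k K _)) = _
  rw [KaehlerDifferential.tensorKaehlerEquivOfFormallyEtale_symm_D_algebraMap]
  simp only [L, D₀, TensorProduct.AlgebraTensorModule.lift_tmul]
  simp
  exact MvPolynomial.mkDerivation_X k w i

lemma exists_derivation {τ : Type*} {v : τ → K}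
    (hv : AlgebraicIndependent k v) (w : τ → K) :
    ∃ D : Derivation k K K, ∀ i, D (v i) = w i := by
  classical
  obtain ⟨t, hst, ht⟩ := exists_isTranscendenceBasis_superset (R := k) hv.to_subtype_range
  obtain ⟨D, hD⟩ := exists_derivation_of_isTranscendenceBasis ht
    (fun z => if h : ∃ i, v i = z then w h.choose else 0)
  refine ⟨D, fun i => ?_⟩
  have h : ∃ j, v j = v i := ⟨i, rfl⟩
  have h2 := hD ⟨v i, hst ⟨i, rfl⟩⟩
  simp only [h, dif_pos] at h2
  rw [h2, hv.injective h.choose_spec]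

/-- The elements killed by a derivation form a subfield, relatively algebraically closed in
characteristic zero. -/
lemma derivation_eq_zero (D : Derivation k K K) {s : Set K} (hs : ∀ z ∈ s, D z = 0) {z : K}
    (hz : IsAlgebraic (adjoin k s) z) : D z = 0 := by
  have hS : ∀ y ∈ adjoin k s, D y = 0 := by
    intro y hy
    induction hy using Algebra.adjoin_induction with
    | mem x hx => exact hs x hx
    | algebraMap r => simp
    | add x y _ _ hx hy => simp [hx, hy]
    | mul x y _ _ hx hy => simp [hx, hy]
  let F : IntermediateField k K :=
    { carrier := {y | D y = 0}
      mul_mem' := fun {a b} ha hb => by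
        have ha' : D a = 0 := ha
        have hb' : D b = 0 := hb
        simp [ha', hb']
      add_mem' := fun {a b} ha hb => by
        have ha' : D a = 0 := ha
        have hb' : D b = 0 := hb
        simp [ha', hb']
      algebraMap_mem' := fun r => by simp
      inv_mem' := fun a ha => by
        have ha' : D a = 0 := ha
        simp [Derivation.leibniz_inv, ha'] }
  have hF : adjoin k s ≤ F.toSubalgebra := hS
  have hzF : IsAlgebraic F z := by
    refine (hz.ringHom_of_comp_eq (f := (Subalgebra.inclusion hF : _ →+* F.toSubalgebra))
      (g := RingHom.id K) (Subalgebra.inclusion_injective hF) (by ext; rfl) :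
        IsAlgebraic F.toSubalgebra z)
  let D' : Derivation F K K := Derivation.mk'
    { toFun := D
      map_add' := map_add D
      map_smul' := fun c y => by
        have hc : D (c : K) = 0 := c.2
        simp [IntermediateField.smul_def, hc] }
    (fun a b => by simp)
  have hsep : (minpoly F z).Separable :=
    (minpoly.irreducible hzF.isIntegral).separable
  have h1 := D'.map_aeval (minpoly F z) z
  rw [minpoly.aeval, map_zero] at h1
  have h2 := hsep.aeval_derivative_ne_zero (minpoly.aeval F z)
  exact (smul_eq_zero.mp h1.symm).resolve_left h2

/-- Values of the `k`-derivations of `K` on the family `x`. -/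
def derivSpace (k : Type*) {K σ : Type*} [Field k] [Field K] [Algebra k K] (x : σ → K) :
    Submodule K (σ → K) :=
  LinearMap.range
    ({ toFun := fun D q => D (x q)
       map_add' := fun _ _ => rfl
       map_smul' := fun _ _ => rfl } : Derivation k K K →ₗ[K] (σ → K))

omit [CharZero k] in
lemma mem_derivSpace {σ : Type*} {x v : σ → K} :
    v ∈ derivSpace k x ↔ ∃ D : Derivation k K K, ∀ q, D (x q) = v q := by
  constructor
  · rintro ⟨D, rfl⟩
    exact ⟨D, fun _ => rfl⟩
  · rintro ⟨D, hD⟩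
    exact ⟨D, funext hD⟩

/-- Derivations are determined by, and may be prescribed freely at, the members of a transcendence
basis of the family. -/
lemma finrank_derivSpace {σ : Type*} [Finite σ] {x : σ → K} {B : Set σ} (hB : IsFamBasis k x B) :
    Module.finrank K (derivSpace k x) = B.ncard := by
  let r : derivSpace k x →ₗ[K] (B → K) :=
    (LinearMap.funLeft K K (Subtype.val : B → σ)).comp (derivSpace k x).subtype
  have hr : Function.Bijective r := by
    constructor
    · rw [← LinearMap.ker_eq_bot, LinearMap.ker_eq_bot']
      rintro ⟨v, hv⟩ h0
      obtain ⟨D, hD⟩ := mem_derivSpace.mp hv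
      ext q
      change v q = 0
      rw [← hD q]
      refine derivation_eq_zero D ?_ (hB.alg q)
      rintro _ ⟨b, hb, rfl⟩
      rw [hD]
      exact congrFun h0 ⟨b, hb⟩
    · intro w
      obtain ⟨D, hD⟩ := exists_derivation hB.indep w
      exact ⟨⟨fun q => D (x q), mem_derivSpace.mpr ⟨D, fun _ => rfl⟩⟩, funext hD⟩
  have := Fintype.ofFinite B
  rw [(LinearEquiv.ofBijective r hr).finrank_eq, Module.finrank_fintype_fun_eq_card,
    ← Nat.card_eq_fintype_card, Nat.card_coe_set_eq]

/-- Jacobian criterion for algebraic independence. -/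
lemma algebraicIndependent_of_det_ne_zero {J : Type*} [Fintype J] [DecidableEq J]
    (f : J → K) (D : J → Derivation k K K)
    (h : (Matrix.of fun j j' => D j (f j')).det ≠ 0) : AlgebraicIndependent k f := by
  obtain ⟨B, hB⟩ := exists_isFamBasis (k := k) f
  have h1 := finrank_derivSpace hB
  have h2 : derivSpace k f = ⊤ := by
    rw [_root_.eq_top_iff]
    have hli : LinearIndependent K (Matrix.of fun j j' => D j (f j')).row :=
      Matrix.linearIndependent_rows_of_det_ne_zero h
    have hsp := hli.span_eq_top_of_card_eq_finrank' (by simp)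
    rw [← hsp, Submodule.span_le]
    rintro _ ⟨j, rfl⟩
    exact mem_derivSpace.mpr ⟨D j, fun _ => rfl⟩
  rw [h2, finrank_top, Module.finrank_fintype_fun_eq_card] at h1
  have h3 : B = Set.univ := by
    refine Set.eq_of_subset_of_ncard_le (Set.subset_univ _) ?_
    rw [← h1, Set.ncard_univ, Nat.card_eq_fintype_card]
  subst h3
  exact hB.indep.comp (fun j => ⟨j, Set.mem_univ j⟩) (fun a b hab => congrArg Subtype.val hab)

end derivations

end independence

/-! ### Complex points: principal open sets, Nullstellensatz, Chevalley -/

section points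
open Filter Topology

lemma isOpen_eval_ne {κ : Type*} (g : MvPolynomial κ ℂ) :
    IsOpen {p : κ → ℂ | MvPolynomial.eval p g ≠ 0} :=
  isOpen_ne_fun (MvPolynomial.continuous_eval g) continuous_const

lemma dense_eval_ne {κ : Type*} [Fintype κ] {g : MvPolynomial κ ℂ} (hg : g ≠ 0) :
    Dense {p : κ → ℂ | MvPolynomial.eval p g ≠ 0} := by
  rw [Metric.dense_iff]
  intro x r hr
  by_contra hne
  rw [Set.not_nonempty_iff_eq_empty, Set.eq_empty_iff_forall_notMem] at hne
  refine hg (MvPolynomial.funext_set (fun i => Metric.ball (x i) r)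
    (fun i => infinite_of_mem_nhds (x i) (Metric.ball_mem_nhds _ hr)) fun p hp => ?_)
  by_contra h0
  refine hne p ⟨?_, by simpa using h0⟩
  rw [ball_pi _ hr]
  exact hp

/-- Nullstellensatz. -/
lemma exists_algHom_ker_eq {B : Type*} [CommRing B] [Algebra ℂ B] [Algebra.FiniteType ℂ B]
    (M : Ideal B) [M.IsMaximal] : ∃ ψ : B →ₐ[ℂ] ℂ, RingHom.ker ψ = M := by
  let _ : Field (B ⧸ M) := Ideal.Quotient.field M
  have : Module.Finite ℂ (B ⧸ M) := finite_of_finite_type_of_isJacobsonRing ℂ (B ⧸ M)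
  have hb : Function.Bijective (algebraMap ℂ (B ⧸ M)) :=
    IsAlgClosed.algebraMap_bijective_of_isIntegral
  let e : ℂ ≃ₐ[ℂ] (B ⧸ M) := AlgEquiv.ofBijective (Algebra.ofId ℂ (B ⧸ M)) hb
  refine ⟨(e.symm : (B ⧸ M) →ₐ[ℂ] ℂ).comp (Ideal.Quotient.mkₐ ℂ M), ?_⟩
  ext b
  simp [RingHom.mem_ker, Ideal.Quotient.eq_zero_iff_mem]

/-- Two `ℂ`-points with nested kernels coincide. -/
lemma algHom_eq_of_ker_le {A : Type*} [CommRing A] [Algebra ℂ A] {φ ψ : A →ₐ[ℂ] ℂ}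
    (h : ∀ a, φ a = 0 → ψ a = 0) : ψ = φ := by
  ext a
  have := h (a - algebraMap ℂ A (φ a)) (by simp)
  rw [map_sub, AlgHom.commutes] at this
  exact sub_eq_zero.mp this

/-- A `ℂ`-point of the source lifts as soon as some proper ideal of the target lies over it. -/
lemma exists_lift_of_comap {A B : Type*} [CommRing A] [Algebra ℂ A] [CommRing B] [Algebra ℂ B]
    [Algebra.FiniteType ℂ B] (f : A →ₐ[ℂ] B) (φ : A →ₐ[ℂ] ℂ) (P : Ideal B) (hP : P ≠ ⊤)
    (h : ∀ a, φ a = 0 → f a ∈ P) : ∃ ψ : B →ₐ[ℂ] ℂ, ψ.comp f = φ ∧ ∀ b ∈ P, ψ b = 0 := by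
  obtain ⟨M, hM, hPM⟩ := P.exists_le_maximal hP
  obtain ⟨ψ, hψ⟩ := exists_algHom_ker_eq M
  have hz : ∀ b ∈ P, ψ b = 0 := fun b hb => by
    have : b ∈ RingHom.ker ψ := hψ ▸ hPM hb
    exact this
  exact ⟨ψ, algHom_eq_of_ker_le fun a ha => hz _ (h a ha), hz⟩

/-- Chevalley: the points of the target of a dominant morphism that lift contain a nonempty
principal open set. -/
lemma exists_lift_generic {A B : Type*} [CommRing A] [IsDomain A] [IsNoetherianRing A] [Algebra ℂ A]
    [CommRing B] [IsDomain B] [Algebra ℂ B] [Algebra.FiniteType ℂ B] (f : A →ₐ[ℂ] B)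
    (hf : Function.Injective f) :
    ∃ G : A, G ≠ 0 ∧ ∀ φ : A →ₐ[ℂ] ℂ, φ G ≠ 0 → ∃ ψ : B →ₐ[ℂ] ℂ, ψ.comp f = φ := by
  have hft : (f : A →+* B).FiniteType := by
    have : ((f : A →+* B).comp (algebraMap ℂ A)).FiniteType := by
      rw [AlgHom.comp_algebraMap]
      exact (RingHom.finiteType_algebraMap).mpr inferInstance
    exact RingHom.FiniteType.of_comp_finiteType this
  obtain ⟨S, hS⟩ := PrimeSpectrum.exists_constructibleSetData_iff.mpr
    (PrimeSpectrum.isConstructible_range_comap (RingHom.FinitePresentation.of_finiteType.mp hft))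
  have hbot : (⊥ : PrimeSpectrum A) ∈ S.toSet := by
    rw [hS]
    refine ⟨⊥, ?_⟩
    ext a
    simp [PrimeSpectrum.comap_asIdeal, hf.eq_iff' (map_zero f)]
  simp only [PrimeSpectrum.ConstructibleSetData.toSet, Set.mem_iUnion] at hbot
  obtain ⟨C, hC, hCg, hCf⟩ := hbot
  refine ⟨C.f, fun h0 => hCf (by simp [h0]), fun φ hφ => ?_⟩
  have hmem : (⟨RingHom.ker φ, RingHom.ker_isPrime φ⟩ : PrimeSpectrum A) ∈ S.toSet := by
    simp only [PrimeSpectrum.ConstructibleSetData.toSet, Set.mem_iUnion]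
    refine ⟨C, hC, ?_, ?_⟩
    · intro a ha
      have : a ∈ (⊥ : Ideal A) := hCg ha
      rw [Ideal.mem_bot] at this
      simp [this]
    · intro h
      exact hφ (h (Set.mem_singleton _))
  rw [hS] at hmem
  obtain ⟨Q, hQ⟩ := hmem
  obtain ⟨ψ, h1, -⟩ := exists_lift_of_comap f φ Q.asIdeal Q.2.ne_top fun a ha => by
    have : a ∈ (PrimeSpectrum.comap (f : A →+* B) Q).asIdeal := by rw [hQ]; exact ha
    exact this
  exact ⟨ψ, h1⟩

end points

/-! ### Zariski dense open sets are dense in the classical topology -/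

section density
open Filter Topology

/-- A monic complex polynomial with small constant coefficient has a small root. -/
lemma exists_small_root {p : Polynomial ℂ} (hp : p.Monic) (hd : 0 < p.natDegree) :
    ∃ t, p.IsRoot t ∧ ‖t‖₊ ^ p.natDegree ≤ ‖p.coeff 0‖₊ := by
  have hs := IsAlgClosed.splits p
  have hcard : p.roots.card = p.natDegree := hs.natDegree_eq_card_roots.symm
  have hne : p.roots.toFinset.Nonempty := by
    rw [Multiset.toFinset_nonempty, ← Multiset.card_pos, hcard]
    exact hd
  obtain ⟨t, ht, hmin⟩ := p.roots.toFinset.exists_min_image (fun z => ‖z‖₊) hne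
  refine ⟨t, (Polynomial.mem_roots hp.ne_zero).mp (Multiset.mem_toFinset.mp ht), ?_⟩
  rw [hs.coeff_zero_eq_prod_roots_of_monic hp, nnnorm_mul, nnnorm_pow, nnnorm_neg, nnnorm_one,
    one_pow, one_mul]
  have h1 : ‖p.roots.prod‖₊ = (p.roots.map (fun z => ‖z‖₊)).prod :=
    map_multiset_prod (nnnormHom : ℂ →*₀ NNReal) p.roots
  rw [h1, ← hcard, ← Multiset.card_map (fun z : ℂ => ‖z‖₊) p.roots]
  refine Multiset.pow_card_le_prod ?_
  intro x hx
  obtain ⟨z, hz, rfl⟩ := Multiset.mem_map.mp hx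
  exact hmin z (Multiset.mem_toFinset.mpr hz)

variable {R : Type*} [CommRing R] [IsDomain R] [Algebra ℂ R]

section fixed
variable {s : ℕ} [Algebra (MvPolynomial (Fin s) ℂ) R] [IsScalarTower ℂ (MvPolynomial (Fin s) ℂ) R]
  [Module.Finite (MvPolynomial (Fin s) ℂ) R]

omit [IsDomain R] [IsScalarTower ℂ (MvPolynomial (Fin s) ℂ) R]
  [Module.Finite (MvPolynomial (Fin s) ℂ) R] in
lemma eval₂_eq_zero_of_lift {q : Polynomial (MvPolynomial (Fin s) ℂ)} {r : R}
    (hr : Polynomial.eval₂ (algebraMap _ R) r q = 0) {z : Fin s → ℂ} {ψ : R →ₐ[ℂ] ℂ}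
    (hψ : ∀ a : MvPolynomial (Fin s) ℂ, ψ (algebraMap _ R a) = MvPolynomial.eval z a) :
    Polynomial.eval₂ (MvPolynomial.eval z) (ψ r) q = 0 := by
  have h1 := congrArg (ψ : R →+* ℂ) hr
  rw [Polynomial.hom_eval₂, map_zero] at h1
  have h2 : MvPolynomial.eval z = (ψ : R →+* ℂ).comp (algebraMap (MvPolynomial (Fin s) ℂ) R) :=
    RingHom.ext fun a => (hψ a).symm
  rw [h2]
  exact h1

omit [IsDomain R] [IsScalarTower ℂ (MvPolynomial (Fin s) ℂ) R] in
lemma finite_fiber (z : Fin s → ℂ) :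
    {ψ : R →ₐ[ℂ] ℂ | ∀ a : MvPolynomial (Fin s) ℂ,
      ψ (algebraMap _ R a) = MvPolynomial.eval z a}.Finite := by
  obtain ⟨S, hS⟩ := Module.Finite.fg_top (R := MvPolynomial (Fin s) ℂ) (M := R)
  choose q hq hr using fun r : R => Algebra.IsIntegral.isIntegral (R := MvPolynomial (Fin s) ℂ) r
  have hT : (Set.univ.pi fun r : S => ((q r).map (MvPolynomial.eval z)).rootSet ℂ).Finite :=
    Set.Finite.pi fun r => Polynomial.rootSet_finite _ _
  refine Set.Finite.of_finite_image (f := fun (ψ : R →ₐ[ℂ] ℂ) (r : S) => ψ r)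
    (hT.subset ?_) ?_
  · rintro _ ⟨ψ, hψ, rfl⟩ r -
    rw [Polynomial.mem_rootSet_of_ne ((hq r).map _).ne_zero, Polynomial.coe_aeval_eq_eval,
      ← Polynomial.eval₂_eq_eval_map]
    exact eval₂_eq_zero_of_lift (hr r) hψ
  · intro ψ hψ ψ' hψ' h
    ext r
    have hmem : r ∈ Submodule.span (MvPolynomial (Fin s) ℂ) (S : Set R) := hS ▸ Submodule.mem_top
    induction hmem using Submodule.span_induction with
    | mem r hr => exact congrFun h ⟨r, hr⟩
    | zero => simp
    | add x y _ _ hx hy => simp [hx, hy]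
    | smul a x _ hx => rw [Algebra.smul_def, map_mul, map_mul, hψ, hψ', hx]

/-- Over a point `z` of affine space (a Noether normalisation) there is a point of the variety
at which `h` is bounded by the constant coefficient of its minimal polynomial: a small root of the
minimal polynomial specialised at `z` is a value of `h` by lying over for
`ℂ[X][T] → R`, `T ↦ h`. -/
lemma exists_lift_small [FaithfulSMul (MvPolynomial (Fin s) ℂ) R] [Algebra.FiniteType ℂ R]
    (h : R) (z : Fin s → ℂ) :
    ∃ ψ : R →ₐ[ℂ] ℂ, (∀ a : MvPolynomial (Fin s) ℂ,
      ψ (algebraMap _ R a) = MvPolynomial.eval z a) ∧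
      ‖ψ h‖₊ ^ (minpoly (MvPolynomial (Fin s) ℂ) h).natDegree ≤
        ‖MvPolynomial.eval z ((minpoly (MvPolynomial (Fin s) ℂ) h).coeff 0)‖₊ := by
  let A := MvPolynomial (Fin s) ℂ
  have hInt : IsIntegral A h := Algebra.IsIntegral.isIntegral h
  have hm := minpoly.monic hInt
  obtain ⟨t, ht, hts⟩ := exists_small_root (hm.map (MvPolynomial.eval z))
    (by rw [hm.natDegree_map]; exact minpoly.natDegree_pos hInt)
  rw [hm.natDegree_map, Polynomial.coeff_map] at hts
  let θ : Polynomial A →ₐ[A] R := Polynomial.aeval h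
  let φ : Polynomial A →ₐ[ℂ] ℂ :=
    { Polynomial.eval₂RingHom (MvPolynomial.eval z) t with
      commutes' := fun c => by
        have : algebraMap ℂ (Polynomial A) c = Polynomial.C (MvPolynomial.C c) := rfl
        simp [this] }
  have hφ : ∀ q, φ q = Polynomial.eval₂ (MvPolynomial.eval z) t q := fun _ => rfl
  let _ : Algebra (Polynomial A) R := θ.toAlgebra
  have : IsScalarTower A (Polynomial A) R := .of_algebraMap_eq' θ.comp_algebraMap.symm
  have : Algebra.IsIntegral (Polynomial A) R := Algebra.IsIntegral.tower_top (R := A)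
  have := RingHom.ker_isPrime φ
  obtain ⟨Q, hQp, hQ⟩ := Ideal.exists_ideal_over_prime_of_isIntegral_of_isDomain (S := R)
    (RingHom.ker φ) (by
      intro q hq
      obtain ⟨c, rfl⟩ := minpoly.isIntegrallyClosed_dvd hInt (p := q) hq
      rw [RingHom.mem_ker, map_mul, hφ, Polynomial.eval₂_eq_eval_map, ht.eq_zero, zero_mul])
  obtain ⟨ψ, hψ, -⟩ := exists_lift_of_comap (θ.restrictScalars ℂ) φ Q hQp.ne_top (by
    intro q hq
    have : q ∈ Ideal.comap (algebraMap (Polynomial A) R) Q := by rw [hQ]; exact hq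
    exact this)
  have hψ' : ∀ q, ψ (θ q) = Polynomial.eval₂ (MvPolynomial.eval z) t q := fun q =>
    DFunLike.congr_fun hψ q
  refine ⟨ψ, fun a => ?_, ?_⟩
  · have := hψ' (Polynomial.C a)
    simpa [θ] using this
  · have := hψ' Polynomial.X
    simp only [θ, Polynomial.aeval_X, Polynomial.eval₂_X] at this
    rw [this]
    exact hts

omit [IsDomain R] [IsScalarTower ℂ (MvPolynomial (Fin s) ℂ) R] in
/-- The Cauchy bound for the integral equation of `r`, locally uniform in the base point. -/
lemma exists_bound (r : R) : ∃ b : (Fin s → ℂ) → NNReal, Continuous b ∧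
    ∀ (z : Fin s → ℂ) (ψ : R →ₐ[ℂ] ℂ), (∀ a : MvPolynomial (Fin s) ℂ,
      ψ (algebraMap _ R a) = MvPolynomial.eval z a) → ‖ψ r‖₊ ≤ b z := by
  obtain ⟨q, hq, hr⟩ := Algebra.IsIntegral.isIntegral (R := MvPolynomial (Fin s) ℂ) r
  refine ⟨fun z => (Finset.range q.natDegree).sup
    (fun i => ‖MvPolynomial.eval z (q.coeff i)‖₊) + 1, ?_, fun z ψ hψ => ?_⟩
  · refine Continuous.add (Continuous.finset_sup_apply fun i _ => ?_) continuous_const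
    exact (MvPolynomial.continuous_eval _).nnnorm
  · have hm := hq.map (MvPolynomial.eval z)
    have hroot : (q.map (MvPolynomial.eval z)).IsRoot (ψ r) := by
      rw [Polynomial.IsRoot.def, ← Polynomial.eval₂_eq_eval_map]
      exact eval₂_eq_zero_of_lift hr hψ
    have h2 := (hroot.norm_lt_cauchyBound hm.ne_zero).le
    simpa [Polynomial.cauchyBound, hm.leadingCoeff, hq.natDegree_map] using h2

end fixed

/-- Zariski open dense subsets of an affine variety are dense in the Euclidean topology: every
point is a limit of points at which `g` does not vanish. -/
lemma exists_tendsto_algHom [Algebra.FiniteType ℂ R] {g : R} (hg : g ≠ 0) (y₀ : R →ₐ[ℂ] ℂ) :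
    ∃ l : Filter (R →ₐ[ℂ] ℂ), l.NeBot ∧ (∀ᶠ ψ in l, ψ g ≠ 0) ∧
      ∀ r, Tendsto (fun ψ : R →ₐ[ℂ] ℂ => ψ r) l (𝓝 (y₀ r)) := by
  classical
  obtain ⟨s, f, hf, hfin⟩ := exists_finite_inj_algHom_of_fg ℂ R
  let A := MvPolynomial (Fin s) ℂ
  let _ : Algebra A R := f.toRingHom.toAlgebra
  have : IsScalarTower ℂ A R := .of_algebraMap_eq' f.comp_algebraMap.symm
  have : Module.Finite A R := hfin
  have : FaithfulSMul A R := (faithfulSMul_iff_algebraMap_injective A R).mpr hf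
  let p₀ : Fin s → ℂ := fun i => y₀ (f (MvPolynomial.X i))
  have hp₀ : ∀ a : A, y₀ (algebraMap A R a) = MvPolynomial.eval p₀ a := by
    intro a
    have : y₀.comp f = MvPolynomial.aeval p₀ := by
      ext i
      simp [p₀]
    exact DFunLike.congr_fun this a
  obtain ⟨a, ha, ha0⟩ := Submodule.exists_mem_ne_zero_of_ne_bot
    (Ideal.comap_ne_bot_of_integral_mem (R := A) hg (Ideal.mem_span_singleton_self g)
      (Algebra.IsIntegral.isIntegral g))
  -- an element of the maximal ideal of `y₀` avoiding the other points of the fibre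
  obtain ⟨h, hh0, hh⟩ : ∃ h : R, y₀ h = 0 ∧ ∀ ψ : R →ₐ[ℂ] ℂ,
      (∀ a : A, ψ (algebraMap A R a) = MvPolynomial.eval p₀ a) → ψ ≠ y₀ → ψ h ≠ 0 := by
    have hfib := finite_fiber (R := R) p₀
    by_contra hcon
    push Not at hcon
    obtain ⟨ψ, hψ, hle⟩ := (Ideal.subset_union_prime (s := hfib.toFinset.erase y₀)
      (f := fun ψ : R →ₐ[ℂ] ℂ => RingHom.ker ψ) y₀ y₀
      (fun ψ _ _ _ => RingHom.ker_isPrime ψ) (I := RingHom.ker y₀)).mp (by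
        intro h hh
        obtain ⟨ψ, h1, h2, h3⟩ := hcon h hh
        simp only [Set.mem_iUnion]
        exact ⟨ψ, Finset.mem_coe.mpr (Finset.mem_erase.mpr ⟨h2, hfib.mem_toFinset.mpr h1⟩), h3⟩)
    rw [Finset.mem_erase] at hψ
    exact hψ.1 (algHom_eq_of_ker_le fun a ha => hle ha)
  choose ψ hψA hψh using exists_lift_small (R := R) (s := s) h
  have hne : (𝓝[{z | MvPolynomial.eval z a ≠ 0}] p₀).NeBot :=
    mem_closure_iff_nhdsWithin_neBot.mp (dense_eval_ne ha0 p₀)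
  let u : Ultrafilter (Fin s → ℂ) := Ultrafilter.of (𝓝[{z | MvPolynomial.eval z a ≠ 0}] p₀)
  have hu : (u : Filter _) ≤ 𝓝[{z | MvPolynomial.eval z a ≠ 0}] p₀ := Ultrafilter.of_le _
  have hu' : (u : Filter _) ≤ 𝓝 p₀ := hu.trans nhdsWithin_le_nhds
  have hlim : ∀ r : R, ∃ L : ℂ, Tendsto (fun z => ψ z r) (u : Filter _) (𝓝 L) := by
    intro r
    obtain ⟨b, hb, hbr⟩ := exists_bound (s := s) r
    have hev : ∀ᶠ z in (u : Filter _), b z < b p₀ + 1 :=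
      hu' ((hb.tendsto p₀).eventually (gt_mem_nhds (by simp)))
    have hK : IsCompact (Metric.closedBall (0 : ℂ) ((b p₀ + 1 : NNReal) : ℝ)) :=
      isCompact_closedBall _ _
    obtain ⟨L, -, hL⟩ := hK.ultrafilter_le_nhds (u.map fun z => ψ z r) (by
      rw [Ultrafilter.coe_map, le_principal_iff, mem_map]
      filter_upwards [hev] with z hz
      simp only [Set.mem_preimage, mem_closedBall_zero_iff]
      exact_mod_cast ((hbr z (ψ z) (hψA z)).trans hz.le))
    exact ⟨L, hL⟩
  choose L hL using hlim
  let ψ' : R →ₐ[ℂ] ℂ :=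
    { toFun := L
      map_one' := tendsto_nhds_unique (hL 1) (by simp)
      map_mul' := fun x y => tendsto_nhds_unique (hL _) (by simpa using (hL x).mul (hL y))
      map_zero' := tendsto_nhds_unique (hL 0) (by simp)
      map_add' := fun x y => tendsto_nhds_unique (hL _) (by simpa using (hL x).add (hL y))
      commutes' := fun c => tendsto_nhds_unique (hL _) (by simp) }
  have hψ' : ψ' = y₀ := by
    by_contra hne
    refine hh ψ' (fun a => ?_) hne ?_
    · refine tendsto_nhds_unique (hL _) ?_
      refine Tendsto.congr (fun z => (hψA z a).symm) ?_
      exact ((MvPolynomial.continuous_eval a).tendsto p₀).mono_left hu'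
    · let m := minpoly A h
      have hc : MvPolynomial.eval p₀ (m.coeff 0) = 0 := by
        have h1 := congrArg (y₀ : R →+* ℂ) (minpoly.aeval A h)
        rw [Polynomial.aeval_def, Polynomial.hom_eval₂, map_zero] at h1
        simp only [RingHom.coe_coe, hh0, Polynomial.eval₂_at_zero] at h1
        rw [← hp₀]
        exact h1
      have h2 : Tendsto (fun z => ‖MvPolynomial.eval z (m.coeff 0)‖₊) (u : Filter _) (𝓝 0) := by
        have := (((MvPolynomial.continuous_eval (m.coeff 0)).nnnorm).tendsto p₀).mono_left hu'
        rwa [hc, nnnorm_zero] at this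
      have h3 : Tendsto (fun z => ‖ψ z h‖₊ ^ m.natDegree) (u : Filter _) (𝓝 0) :=
        tendsto_of_tendsto_of_tendsto_of_le_of_le tendsto_const_nhds h2
          (fun _ => zero_le) (fun z => hψh z)
      have h4 := tendsto_nhds_unique (((hL h).nnnorm).pow m.natDegree) h3
      exact nnnorm_eq_zero.mp (eq_zero_of_pow_eq_zero h4)
  refine ⟨(u : Filter _).map ψ, inferInstance, ?_, fun r => ?_⟩
  · rw [eventually_map]
    filter_upwards [hu self_mem_nhdsWithin] with z hz hzero
    obtain ⟨c, hc⟩ := Ideal.mem_span_singleton'.mp ha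
    refine hz ?_
    rw [← hψA z, ← hc, map_mul, hzero, mul_zero]
  · rw [tendsto_map'_iff, ← hψ']
    exact hL r

end density

/-! ### Slices and the upper bound for the intrinsic dimension -/

section slices
open Filter Topology
variable {ι : Type*} {n e : ι → ℕ}

/-- Labels of the affine forms of a slice with `e i` forms in the `i`-th group. -/
abbrev FormIdx (e : ι → ℕ) : Type _ := (i : ι) × Fin (e i)

/-- Labels of the linear coefficients of the forms of a slice. -/
abbrev CoefIdx (n e : ι → ℕ) : Type _ := (j : FormIdx e) × Fin (n j.1)

/-- The negatives of the linear parts of the forms of a slice, evaluated at the tuple `x`; the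
sign is such that a slice is given by equating them to the constant terms. -/
def linForm {A : Type*} [CommRing A] (α : CoefIdx n e → A) (x : ((i : ι) × Fin (n i)) → A)
    (j : FormIdx e) : A :=
  -∑ a, α ⟨j, a⟩ * x ⟨j.1, a⟩

lemma map_linForm {A A' F : Type*} [CommRing A] [CommRing A'] [FunLike F A A']
    [RingHomClass F A A'] (f : F) (α : CoefIdx n e → A) (x : ((i : ι) × Fin (n i)) → A)
    (j : FormIdx e) : f (linForm α x j) = linForm (fun ν => f (α ν)) (fun q => f (x q)) j := by
  simp [linForm, map_neg, map_sum, map_mul]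

/-- Coefficients and constants of a slice, collected in a single vector. -/
def sliceHomeo (n e : ι → ℕ) :
    ((CoefIdx n e ⊕ FormIdx e) → ℂ) ≃ₜ ((i : ι) → Fin (e i) → ((Fin (n i) → ℂ) × ℂ)) where
  toFun c i j := (fun a => c (.inl ⟨⟨i, j⟩, a⟩), c (.inr ⟨i, j⟩))
  invFun L := Sum.elim (fun ν => (L ν.1.1 ν.1.2).1 ν.2) (fun j => (L j.1 j.2).2)
  left_inv c := by
    ext (ν | j) <;> rfl
  right_inv L := rfl
  continuous_toFun := by fun_prop
  continuous_invFun := by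
    refine continuous_pi ?_
    rintro (ν | j)
    · exact (continuous_apply ν.2).comp (continuous_fst.comp
        ((continuous_apply ν.1.2).comp (continuous_apply ν.1.1)))
    · exact continuous_snd.comp ((continuous_apply j.2).comp (continuous_apply j.1))

variable {R : Type*} [CommRing R] [Algebra ℂ R]

/-- The image of the variety of `ℂ`-points of `R` under the map with coordinates `x`. -/
def ptSet (x : ((i : ι) × Fin (n i)) → R) : Set (APt n) :=
  {p | ∃ φ : R →ₐ[ℂ] ℂ, ∀ i a, p i a = φ (x ⟨i, a⟩)}

lemma mem_sliceZeros {x : ((i : ι) × Fin (n i)) → R} {φ : R →ₐ[ℂ] ℂ} {p : APt n}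
    (hp : ∀ i a, p i a = φ (x ⟨i, a⟩)) (c : (CoefIdx n e ⊕ FormIdx e) → ℂ) :
    p ∈ SliceZeros (sliceHomeo n e c) ↔
      ∀ j, linForm (fun ν => c (.inl ν)) (fun q => φ (x q)) j = c (.inr j) := by
  simp only [SliceZeros, Set.mem_ofPred_eq, linForm, hp, Sigma.forall]
  refine forall_congr' fun i => forall_congr' fun j => ?_
  rw [neg_eq_iff_add_eq_zero]
  exact Iff.rfl

/-- Forms with numerical coefficients. -/
def numForm (x : ((i : ι) × Fin (n i)) → R) (a : CoefIdx n e → ℂ) : FormIdx e → R :=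
  linForm (fun ν => algebraMap ℂ R (a ν)) x

lemma algHom_numForm (x : ((i : ι) × Fin (n i)) → R) (a : CoefIdx n e → ℂ) (φ : R →ₐ[ℂ] ℂ) (j) :
    φ (numForm x a j) = linForm a (fun q => φ (x q)) j := by
  simp [numForm, map_linForm]

lemma isAlgebraic_linForm {k A : Type*} [Field k] [CommRing A] [IsDomain A] [Algebra k A]
    {s : Set A} (α : CoefIdx n e → A) (x : ((i : ι) × Fin (n i)) → A)
    (hα : ∀ ν, IsAlgebraic (Algebra.adjoin k s) (α ν))
    (hx : ∀ q, IsAlgebraic (Algebra.adjoin k s) (x q)) (j : FormIdx e) :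
    IsAlgebraic (Algebra.adjoin k s) (linForm α x j) :=
  IsAlgebraic.neg ((Subalgebra.algebraicClosure (Algebra.adjoin k s) A).sum_mem
    fun a _ => (hα ⟨j, a⟩).mul (hx ⟨j.1, a⟩))

variable [Fintype ι]

/-- If the forms of a slice outnumber the transcendence basis, they satisfy a polynomial relation on
the variety, which generic constant terms violate; generic slices are then empty. -/
lemma sum_le_of_mem_mDim [IsDomain R] (x : ((i : ι) × Fin (n i)) → R)
    {B : Set ((i : ι) × Fin (n i))} (hB : IsFamBasis ℂ x B) (he : e ∈ MDim (ptSet x)) :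
    ∑ i, e i ≤ B.ncard := by
  classical
  obtain ⟨-, U, hU, hUd, hUS⟩ := he
  have hcard : Fintype.card (FormIdx e) = ∑ i, e i := by simp
  by_contra hlt
  let U' := sliceHomeo n e ⁻¹' U
  have hU' : IsOpen U' := hU.preimage (sliceHomeo n e).continuous
  have hUd' : Dense U' := hUd.preimage (sliceHomeo n e).isOpenMap
  obtain ⟨c₀, hc₀⟩ := hUd'.nonempty
  let a : CoefIdx n e → ℂ := fun ν => c₀ (.inl ν)
  have hdep : ¬ AlgebraicIndependent ℂ (numForm x a) := by
    intro hind
    refine hlt ?_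
    rw [← hcard]
    refine (card_le_of_isAlgebraic hind (s := x '' B) (Set.toFinite _) fun j => ?_).trans
      (Set.ncard_image_le (Set.toFinite _))
    exact isAlgebraic_linForm _ _ (fun ν => isAlgebraic_algebraMap (algebraMap ℂ _ (a ν))) hB.alg j
  obtain ⟨Q, hQ, hQ0⟩ : ∃ Q : MvPolynomial (FormIdx e) ℂ,
      MvPolynomial.aeval (numForm x a) Q = 0 ∧ Q ≠ 0 := by
    rw [algebraicIndependent_iff] at hdep
    push Not at hdep
    exact hdep
  obtain ⟨t, htU, htQ⟩ := (dense_eval_ne hQ0).inter_open_nonempty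
    {t : FormIdx e → ℂ | Sum.elim a t ∈ U'}
    (hU'.preimage (continuous_pi (by rintro (ν | j) <;> simp <;> fun_prop)))
    ⟨fun j => c₀ (.inr j), by
      have : Sum.elim a (fun j => c₀ (.inr j)) = c₀ := by ext (ν | j) <;> rfl
      simpa [this] using hc₀⟩
  obtain ⟨-, p, ⟨φ, hφ⟩, hp⟩ := hUS _ htU
  rw [mem_sliceZeros hφ] at hp
  apply htQ
  have h1 : (fun j => φ (numForm x a j)) = t := by
    ext j
    rw [algHom_numForm]
    exact hp j
  rw [← h1, ← MvPolynomial.coe_aeval_eq_eval, RingHom.coe_coe]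
  have h2 := congrArg φ hQ
  rwa [map_zero, ← AlgHom.comp_apply, MvPolynomial.comp_aeval] at h2

/-- The coefficients of a generic slice together with the values of its linear parts,
as elements of the polynomial ring in the coefficients over `R`. -/
noncomputable def genFam (x : ((i : ι) × Fin (n i)) → R) :
    CoefIdx n e ⊕ FormIdx e → MvPolynomial (CoefIdx n e) R :=
  Sum.elim MvPolynomial.X (linForm MvPolynomial.X fun q => MvPolynomial.C (x q))

/-- Specialisation of the generic coefficients. -/
noncomputable def spec (a : CoefIdx n e → ℂ) : MvPolynomial (CoefIdx n e) R →ₐ[ℂ] R :=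
  (MvPolynomial.aeval fun ν => algebraMap ℂ R (a ν) :
    MvPolynomial (CoefIdx n e) R →ₐ[R] R).restrictScalars ℂ

omit [Fintype ι] in
lemma spec_C (a : CoefIdx n e → ℂ) (r : R) : spec a (MvPolynomial.C r) = r := by
  simp [spec]

omit [Fintype ι] in
lemma spec_X (a : CoefIdx n e → ℂ) (ν) :
    spec (R := R) a (MvPolynomial.X ν) = algebraMap ℂ R (a ν) := by
  simp [spec]

omit [Fintype ι] in
lemma spec_genFam (x : ((i : ι) × Fin (n i)) → R) (a : CoefIdx n e → ℂ) (s) :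
    spec a (genFam x s) = Sum.elim (fun ν => algebraMap ℂ R (a ν)) (numForm x a) s := by
  rcases s with ν | j
  · simp [genFam, spec_X]
  · simp [genFam, map_linForm, spec_X, spec_C, numForm]

end slices

/-! ### Algebraic independence of generic slices -/

section slices
open Filter Topology
variable {ι : Type*} {n e : ι → ℕ}
variable {R : Type*} [CommRing R] [Algebra ℂ R]
variable [Fintype ι]
/-- If the members of the transcendence basis `B` are distributed among the groups according
to `e`, the generic coefficients and linear parts are algebraically independent: the Jacobian
determinant of the linear parts is a nonzero polynomial in the coefficients. -/
lemma algebraicIndependent_genFam [IsDomain R] (x : ((i : ι) × Fin (n i)) → R)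
    (b : (j : FormIdx e) → Fin (n j.1))
    (hind : AlgebraicIndependent ℂ fun j : FormIdx e => x ⟨j.1, b j⟩) :
    AlgebraicIndependent ℂ (genFam (e := e) x) := by
  classical
  let K := FractionRing R
  let y : ((i : ι) × Fin (n i)) → K := fun q => algebraMap R K (x q)
  have hinj : Function.Injective (IsScalarTower.toAlgHom ℂ R K) := IsFractionRing.injective R K
  have hindK : AlgebraicIndependent ℂ fun j : FormIdx e => y ⟨j.1, b j⟩ :=
    hind.map' (f := IsScalarTower.toAlgHom ℂ R K) hinj
  choose D hD using fun j : FormIdx e =>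
    exists_derivation hindK (fun j' => if j = j' then (1 : K) else 0)
  let M : Matrix (FormIdx e) (FormIdx e) (MvPolynomial (CoefIdx n e) K) :=
    Matrix.of fun j j' => linForm MvPolynomial.X (fun q => MvPolynomial.C (D j (y q))) j'
  -- specialising the coefficients turns `M` into the Jacobian matrix of the numerical forms
  have hM : ∀ a : CoefIdx n e → ℂ,
      MvPolynomial.eval (fun ν => algebraMap ℂ K (a ν)) M.det =
        (Matrix.of fun j j' => D j (numForm y a j')).det := by
    intro a
    rw [RingHom.map_det]
    congr 1
    ext j j'
    simp only [M, RingHom.mapMatrix_apply, Matrix.map_apply, Matrix.of_apply, map_linForm,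
      MvPolynomial.eval_X, MvPolynomial.eval_C, numForm]
    simp [linForm]
  have hdet : M.det ≠ 0 := by
    intro h0
    have h1 := hM fun ν => if ν.2 = b ν.1 then -1 else 0
    have h2 : (Matrix.of fun j j' => D j (numForm y
        (fun ν : CoefIdx n e => if ν.2 = b ν.1 then (-1 : ℂ) else 0) j')) = 1 := by
      ext j j'
      have : numForm y (fun ν : CoefIdx n e => if ν.2 = b ν.1 then (-1 : ℂ) else 0) j' =
          y ⟨j'.1, b j'⟩ := by
        simp only [numForm, linForm, apply_ite (algebraMap ℂ K), ite_mul, map_zero, zero_mul,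
          Finset.sum_ite_eq', Finset.mem_univ, if_true, map_neg, map_one]
        ring
      rw [Matrix.of_apply, this, hD, Matrix.one_apply]
    rw [h0, map_zero, h2, Matrix.det_one] at h1
    exact zero_ne_one h1
  rw [algebraicIndependent_iff]
  intro P hP
  have hzero : MvPolynomial.rename Sum.inl M.det * MvPolynomial.map (algebraMap ℂ K) P = 0 := by
    refine MvPolynomial.funext_set (fun _ => Set.range (algebraMap ℂ K))
      (fun _ => Set.infinite_range_of_injective (algebraMap ℂ K).injective) fun c' hc' => ?_
    choose c hc using fun s => hc' s (Set.mem_univ s)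
    obtain rfl : (fun s => algebraMap ℂ K (c s)) = c' := funext hc
    rw [map_mul, map_zero, MvPolynomial.eval_rename, MvPolynomial.eval_map, mul_eq_zero]
    change MvPolynomial.eval (fun ν => algebraMap ℂ K (c (.inl ν))) M.det = 0 ∨ _
    rw [hM, or_iff_not_imp_left]
    intro hne
    have hindc := algebraicIndependent_of_det_ne_zero (k := ℂ) _ _ hne
    let a : CoefIdx n e → ℂ := fun ν => c (.inl ν)
    let Pa : MvPolynomial (FormIdx e) ℂ :=
      MvPolynomial.aeval (Sum.elim (fun ν => MvPolynomial.C (a ν)) MvPolynomial.X) P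
    have hPa : Pa = 0 := by
      refine (algebraicIndependent_iff.mp hindc) _ ?_
      have h1 := congrArg ((IsScalarTower.toAlgHom ℂ R K).comp (spec a)) hP
      rw [map_zero, ← AlgHom.comp_apply, MvPolynomial.comp_aeval] at h1
      simp only [Pa]
      rw [← AlgHom.comp_apply, MvPolynomial.comp_aeval, ← h1]
      congr 2
      ext (ν | j)
      · simp [spec_genFam, a, ← IsScalarTower.algebraMap_apply]
      · simp [spec_genFam, a, numForm, map_linForm, y, ← IsScalarTower.algebraMap_apply]
    have h3 := congrArg (MvPolynomial.eval fun j => c (.inr j)) hPa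
    rw [map_zero, ← MvPolynomial.coe_aeval_eq_eval, RingHom.coe_coe] at h3
    simp only [Pa] at h3
    rw [← AlgHom.comp_apply, MvPolynomial.comp_aeval] at h3
    have h4 : (fun s => MvPolynomial.aeval (fun j => c (.inr j))
        (Sum.elim (fun ν => MvPolynomial.C (a ν)) MvPolynomial.X s :
          MvPolynomial (FormIdx e) ℂ)) = c := by
      ext (ν | j) <;> simp [a]
    rw [h4] at h3
    have h5 := MvPolynomial.aeval_algebraMap_apply K c P
    rw [h3, map_zero] at h5
    exact h5
  rcases mul_eq_zero.mp hzero with h | h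
  · exact absurd ((MvPolynomial.rename_injective _ Sum.inl_injective) (h.trans (map_zero _).symm))
      hdet
  · exact (MvPolynomial.map_injective _ (algebraMap ℂ K).injective) (h.trans (map_zero _).symm)

end slices

/-! ### Intrinsic dimension as transcendence degree -/

section slices
open Filter Topology
variable {ι : Type*} {n e : ι → ℕ}
variable {R : Type*} [CommRing R] [Algebra ℂ R]
variable [Fintype ι]

/-- The `ℂ`-points of the variety satisfying the equations of the slice `c`. -/
def OnSlice (x : ((i : ι) × Fin (n i)) → R) (c : CoefIdx n e ⊕ FormIdx e → ℂ)
    (φ : R →ₐ[ℂ] ℂ) : Prop :=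
  ∀ j, linForm (fun ν => c (.inl ν)) (fun q => φ (x q)) j = c (.inr j)

omit [Fintype ι] in
lemma OnSlice.eval_genFam {x : ((i : ι) × Fin (n i)) → R} {c : CoefIdx n e ⊕ FormIdx e → ℂ}
    {φ : R →ₐ[ℂ] ℂ} (h : OnSlice x c φ) (s) :
    φ (spec (fun ν => c (.inl ν)) (genFam x s)) = c s := by
  rcases s with ν | j
  · simp [spec_genFam]
  · simp only [spec_genFam, Sum.elim_inr, algHom_numForm]
    exact h j

/-- When the generic coefficients and linear parts are algebraically independent, the incidence
variety dominates the space of slices, so a generic slice meets the variety. -/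
lemma exists_onSlice [IsDomain R] [Algebra.FiniteType ℂ R] (x : ((i : ι) × Fin (n i)) → R)
    (hind : AlgebraicIndependent ℂ (genFam (e := e) x)) :
    ∃ G : MvPolynomial (CoefIdx n e ⊕ FormIdx e) ℂ, G ≠ 0 ∧ ∀ c, MvPolynomial.eval c G ≠ 0 →
      ∃ φ : R →ₐ[ℂ] ℂ, OnSlice x c φ := by
  obtain ⟨G, hG, h⟩ := exists_lift_generic (MvPolynomial.aeval (R := ℂ) (genFam (e := e) x)) hind
  refine ⟨G, hG, fun c hc => ?_⟩
  obtain ⟨ψ, hψ⟩ := h (MvPolynomial.aeval c) hc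
  have hψ' : ∀ s, ψ (genFam x s) = c s := fun s => by
    have := DFunLike.congr_fun hψ (MvPolynomial.X s)
    simpa using this
  refine ⟨ψ.comp (IsScalarTower.toAlgHom ℂ R (MvPolynomial (CoefIdx n e) R)), fun j => ?_⟩
  have h1 := hψ' (.inr j)
  have h2 : ∀ ν, ψ (MvPolynomial.X ν) = c (.inl ν) := fun ν => hψ' (.inl ν)
  simpa [genFam, map_linForm, h2] using h1

/-- When there are as many forms as members of the transcendence basis, each coordinate satisfies a
nontrivial equation over the space of slices, so it takes finitely many values on a generic
slice. -/
lemma finite_onSlice [IsDomain R] (x : ((i : ι) × Fin (n i)) → R)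
    {B : Set ((i : ι) × Fin (n i))} (hB : IsFamBasis ℂ x B) (he : ∑ i, e i = B.ncard)
    (q : (i : ι) × Fin (n i)) :
    ∃ H : MvPolynomial (CoefIdx n e ⊕ FormIdx e) ℂ, H ≠ 0 ∧ ∀ c, MvPolynomial.eval c H ≠ 0 →
      {z | ∃ φ : R →ₐ[ℂ] ℂ, OnSlice x c φ ∧ φ (x q) = z}.Finite := by
  classical
  let E := MvPolynomial (CoefIdx n e) R
  let f : Option (CoefIdx n e ⊕ FormIdx e) → E :=
    fun o => o.elim (MvPolynomial.C (x q)) (genFam x)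
  have hdep : ¬ AlgebraicIndependent ℂ f := by
    intro hind
    let s : Set E := Set.range MvPolynomial.X ∪ (fun r => MvPolynomial.C r) '' (x '' B)
    have hX : ∀ ν, IsAlgebraic (Algebra.adjoin ℂ s) (MvPolynomial.X ν : E) := fun ν =>
      isAlgebraic_algebraMap
        (⟨_, Algebra.subset_adjoin (.inl ⟨ν, rfl⟩)⟩ : Algebra.adjoin ℂ s)
    have hC : ∀ q, IsAlgebraic (Algebra.adjoin ℂ s) (MvPolynomial.C (x q) : E) := fun q =>
      isAlgebraic_map (IsScalarTower.toAlgHom ℂ R E) (MvPolynomial.C_injective _ _) (hB.alg q)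
        Set.subset_union_right
    have h1 := card_le_of_isAlgebraic hind (s := s) (Set.toFinite _) (by
      rintro (_ | ν | j)
      · exact hC q
      · exact hX ν
      · exact isAlgebraic_linForm _ _ hX hC j)
    have h2 : s.ncard ≤ Fintype.card (CoefIdx n e) + B.ncard := by
      refine (Set.ncard_union_le _ _).trans (add_le_add ?_ ?_)
      · rw [← Set.image_univ, ← Nat.card_eq_fintype_card, ← Set.ncard_univ]
        exact Set.ncard_image_le (Set.toFinite _)
      · exact (Set.ncard_image_le (Set.toFinite _)).trans (Set.ncard_image_le (Set.toFinite _))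
    have h3 : Fintype.card (FormIdx e) = ∑ i, e i := by simp
    rw [Fintype.card_option, Fintype.card_sum] at h1
    omega
  obtain ⟨Q, hQ, hQ0⟩ : ∃ Q : MvPolynomial (Option (CoefIdx n e ⊕ FormIdx e)) ℂ,
      MvPolynomial.aeval f Q = 0 ∧ Q ≠ 0 := by
    rw [algebraicIndependent_iff] at hdep
    push Not at hdep
    exact hdep
  let T := MvPolynomial.optionEquivLeft ℂ (CoefIdx n e ⊕ FormIdx e) Q
  have hT : T ≠ 0 := by simpa [T] using hQ0
  refine ⟨T.leadingCoeff, Polynomial.leadingCoeff_ne_zero.mpr hT, fun c hc => ?_⟩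
  have hTc : T.map (MvPolynomial.eval c) ≠ 0 := fun h0 => hc (by
    have := congrArg (fun p => p.coeff T.natDegree) h0
    simpa using this)
  refine (Polynomial.rootSet_finite (T.map (MvPolynomial.eval c)) ℂ).subset ?_
  rintro _ ⟨φ, hφ, rfl⟩
  rw [Polynomial.mem_rootSet_of_ne hTc, Polynomial.coe_aeval_eq_eval,
    ← MvPolynomial.optionEquivLeft_elim_eval, ← MvPolynomial.coe_aeval_eq_eval, RingHom.coe_coe]
  have h1 := congrArg (φ.comp (spec fun ν => c (.inl ν))) hQ
  rw [map_zero, ← AlgHom.comp_apply, MvPolynomial.comp_aeval] at h1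
  rw [← h1]
  congr 2
  ext (_ | s)
  · simp [f, spec_C]
  · simpa [f] using (hφ.eval_genFam s).symm

/-- The intrinsic dimension of the image of an affine variety is the transcendence degree of the
algebra generated by the coordinate functions. -/
lemma dimOf_ptSet [DecidableEq ι] [IsDomain R] [Algebra.FiniteType ℂ R]
    (x : ((i : ι) × Fin (n i)) → R)
    {B : Set ((i : ι) × Fin (n i))} (hB : IsFamBasis ℂ x B) :
    dimOf (ptSet x) = B.ncard := by
  classical
  refine IsGreatest.csSup_eq ⟨?_, ?_⟩
  swap
  · rintro _ ⟨e, he, rfl⟩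
    exact sum_le_of_mem_mDim x hB he
  let e : ι → ℕ := fun i => Fintype.card {a : Fin (n i) // (⟨i, a⟩ : (i : ι) × Fin (n i)) ∈ B}
  let ε : ∀ i, Fin (e i) ≃ {a : Fin (n i) // (⟨i, a⟩ : (i : ι) × Fin (n i)) ∈ B} :=
    fun i => (Fintype.equivFin _).symm
  let b : (j : FormIdx e) → Fin (n j.1) := fun j => ε j.1 j.2
  let β : FormIdx e ≃ B :=
    { toFun := fun j => ⟨⟨j.1, b j⟩, (ε j.1 j.2).2⟩
      invFun := fun q => ⟨q.1.1, (ε q.1.1).symm ⟨q.1.2, q.2⟩⟩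
      left_inv := fun j => by simp [b]
      right_inv := fun q => by simp [b] }
  have hsum : ∑ i, e i = B.ncard := by
    rw [← Nat.card_coe_set_eq, ← Nat.card_congr β, Nat.card_eq_fintype_card]
    simp
  have hind : AlgebraicIndependent ℂ fun j : FormIdx e => x ⟨j.1, b j⟩ :=
    hB.indep.comp β β.injective
  obtain ⟨G, hG, hne⟩ := exists_onSlice x (algebraicIndependent_genFam x b hind)
  choose H hH hfin using finite_onSlice (e := e) x hB hsum
  refine ⟨e, ⟨fun i => (Fintype.card_subtype_le _).trans_eq (Fintype.card_fin _), ?_⟩, hsum⟩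
  let W : Set (CoefIdx n e ⊕ FormIdx e → ℂ) := {c | MvPolynomial.eval c (G * ∏ q, H q) ≠ 0}
  have hW : IsOpen W := isOpen_eval_ne _
  have hWd : Dense W := dense_eval_ne
    (mul_ne_zero hG (Finset.prod_ne_zero_iff.mpr fun q _ => hH q))
  refine ⟨sliceHomeo n e '' W, (sliceHomeo n e).isOpenMap _ hW,
    (sliceHomeo n e).surjective.denseRange.dense_image (sliceHomeo n e).continuous hWd, ?_⟩
  rintro _ ⟨c, hc, rfl⟩
  have hc' : MvPolynomial.eval c G ≠ 0 ∧ ∀ q, MvPolynomial.eval c (H q) ≠ 0 := by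
    simpa [W, Finset.prod_eq_zero_iff, Sigma.forall] using hc
  constructor
  · refine (Set.Finite.pi' fun i => Set.Finite.pi' fun a => hfin ⟨i, a⟩ c (hc'.2 _)).subset ?_
    rintro p ⟨⟨φ, hφ⟩, hp⟩ i a
    exact ⟨φ, (mem_sliceZeros hφ c).mp hp, (hφ i a).symm⟩
  · obtain ⟨φ, hφ⟩ := hne c hc'.1
    have hp : ∀ i a, (fun (i : ι) (a : Fin (n i)) => φ (x ⟨i, a⟩)) i a = φ (x ⟨i, a⟩) :=
      fun _ _ => rfl
    exact ⟨fun i a => φ (x ⟨i, a⟩), ⟨φ, hp⟩, (mem_sliceZeros hp c).mpr hφ⟩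

end slices

/-! ### Ranks of matrices of regular functions -/

section ranks

/-- Some `rank M` columns of `M` are linearly independent. -/
lemma exists_cols {m κ k : Type*} [Fintype m] [Fintype κ] [Field k] (M : Matrix m κ k) :
    ∃ g : Fin M.rank → κ, LinearIndependent k (M.submatrix id g).col := by
  obtain ⟨τ, a, ha, hsp, hli⟩ := exists_linearIndependent' k M.col
  have := Finite.of_injective a ha
  have := Fintype.ofFinite τ
  have hc : Fintype.card τ = M.rank := by
    rw [M.rank_eq_finrank_span_cols, ← hsp, finrank_span_eq_card hli]
  let e := (Fintype.equivFinOfCardEq hc).symm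
  exact ⟨a ∘ e, hli.comp e e.injective⟩

lemma exists_minor_ne_zero {m κ k : Type*} [Finite m] [Fintype κ] [Field k] (M : Matrix m κ k) :
    ∃ (f : Fin M.rank → m) (g : Fin M.rank → κ), (M.submatrix f g).det ≠ 0 := by
  have := Fintype.ofFinite m
  obtain ⟨g, hg⟩ := exists_cols M
  obtain ⟨f, hf⟩ := exists_cols (M.submatrix id g).transpose
  have hr : (M.submatrix id g).transpose.rank = M.rank := by
    rw [Matrix.rank_transpose, Matrix.rank_eq_finrank_span_cols, finrank_span_eq_card hg,
      Fintype.card_fin]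
  refine ⟨f ∘ finCongr hr.symm, g, ?_⟩
  have h1 : LinearIndependent k (M.submatrix (f ∘ finCongr hr.symm) g).row :=
    hf.comp _ (finCongr hr.symm).injective
  rw [Matrix.linearIndependent_rows_iff_isUnit, Matrix.isUnit_iff_isUnit_det] at h1
  exact h1.ne_zero

lemma finrank_ker_toLin' {m κ k : Type*} [Fintype m] [Fintype κ] [DecidableEq κ] [Field k]
    (M : Matrix m κ k) :
    Module.finrank k (LinearMap.ker (Matrix.toLin' M)) + M.rank = Fintype.card κ := by
  have h := LinearMap.finrank_range_add_finrank_ker (Matrix.toLin' M)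
  rw [Module.finrank_fintype_fun_eq_card] at h
  rw [← h, add_comm]
  rfl

variable {R : Type*} [CommRing R] [IsDomain R] [Algebra ℂ R]
variable {m κ : Type*} [Finite m] [Fintype κ]

/-- Specialising at a point cannot increase the rank. -/
lemma rank_map_le (M : Matrix m κ R) (φ : R →ₐ[ℂ] ℂ) :
    (M.map φ).rank ≤ (M.map (algebraMap R (FractionRing R))).rank := by
  obtain ⟨f, g, h⟩ := exists_minor_ne_zero (M.map φ)
  have h1 : (M.submatrix f g).det ≠ 0 := fun h0 => h (by
    have := congrArg φ h0
    rwa [map_zero, AlgHom.map_det] at this)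
  have h2 : ((M.map (algebraMap R (FractionRing R))).submatrix f g).det ≠ 0 := fun h0 => h1 (by
    have h3 := RingHom.map_det (algebraMap R (FractionRing R)) (M.submatrix f g)
    exact (IsFractionRing.injective R (FractionRing R)) (by rw [h3, map_zero]; exact h0))
  have h3 := Matrix.rank_submatrix_le (M.map (algebraMap R (FractionRing R))) f g
  rw [Matrix.rank_of_det_ne_zero h2, Fintype.card_fin] at h3
  exact h3

/-- The rank of a matrix of regular functions is generically its rank over the function field. -/
lemma exists_rank_map_eq (M : Matrix m κ R) :
    ∃ s : R, s ≠ 0 ∧ ∀ φ : R →ₐ[ℂ] ℂ, φ s ≠ 0 →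
      (M.map φ).rank = (M.map (algebraMap R (FractionRing R))).rank := by
  obtain ⟨f, g, h⟩ := exists_minor_ne_zero (M.map (algebraMap R (FractionRing R)))
  refine ⟨(M.submatrix f g).det, fun h0 => h ?_, fun φ hφ => (rank_map_le M φ).antisymm ?_⟩
  · have := congrArg (algebraMap R (FractionRing R)) h0
    rwa [map_zero, RingHom.map_det] at this
  · have h2 : ((M.map φ).submatrix f g).det ≠ 0 := by rwa [AlgHom.map_det] at hφ
    have h3 := Matrix.rank_submatrix_le (M.map φ) f g
    rw [Matrix.rank_of_det_ne_zero h2, Fintype.card_fin] at h3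
    exact h3

end ranks

section main
variable {k K : Type*} [Field k] [CharZero k] [Field K] [Algebra k K]

omit [CharZero k] in
/-- If the derivations of `K` fill the kernel of `M`, rank-nullity for the restriction of this
kernel to the coordinates in the image of `κ`. -/
lemma finrank_derivSpace_add {μ σ τ : Type*} [Fintype μ] [Fintype σ] [DecidableEq σ] [Fintype τ]
    {y : σ → K} {M : Matrix μ σ K} (hM : derivSpace k y = LinearMap.ker (Matrix.toLin' M))
    (p : σ → Prop) [DecidablePred p] (κ : τ → σ) (hκ : ∀ q, ¬ p q ↔ q ∈ Set.range κ) :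
    Module.finrank K (derivSpace k (y ∘ κ)) +
      Module.finrank K (LinearMap.ker
        (Matrix.toLin' (M.submatrix id (Subtype.val : {q // p q} → σ)))) =
      Module.finrank K (LinearMap.ker (Matrix.toLin' M)) := by
  let ρ : LinearMap.ker (Matrix.toLin' M) →ₗ[K] (τ → K) :=
    (LinearMap.funLeft K K κ).comp (LinearMap.ker (Matrix.toLin' M)).subtype
  have hsplit : ∀ v : σ → K, (∀ t, v (κ t) = 0) → ∀ a,
      (M.submatrix id (Subtype.val : {q // p q} → σ)).mulVec (fun q => v q) a = M.mulVec v a := by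
    intro v hv a
    simp only [Matrix.mulVec, dotProduct, Matrix.submatrix_apply, id]
    rw [← Fintype.sum_subtype_add_sum_subtype p (fun q => M a q * v q), left_eq_add]
    refine Finset.sum_eq_zero fun q _ => ?_
    obtain ⟨t, ht⟩ := (hκ q).mp q.2
    rw [← ht, hv, mul_zero]
  have hrange : LinearMap.range ρ = derivSpace k (y ∘ κ) := by
    ext w
    rw [mem_derivSpace]
    constructor
    · rintro ⟨⟨v, hv⟩, rfl⟩
      rw [← hM] at hv
      obtain ⟨D, hD⟩ := mem_derivSpace.mp hv
      exact ⟨D, fun t => hD (κ t)⟩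
    · rintro ⟨D, hD⟩
      exact ⟨⟨fun q => D (y q), hM ▸ mem_derivSpace.mpr ⟨D, fun _ => rfl⟩⟩, funext hD⟩
  have hv0 : ∀ v : LinearMap.ker ρ, ∀ t, (v.1.1 : σ → K) (κ t) = 0 := fun v t => congrFun v.2 t
  let r : LinearMap.ker ρ →ₗ[K] LinearMap.ker
      (Matrix.toLin' (M.submatrix id (Subtype.val : {q // p q} → σ))) :=
    LinearMap.codRestrict _ ((LinearMap.funLeft K K (Subtype.val : {q // p q} → σ)).comp
      ((LinearMap.ker (Matrix.toLin' M)).subtype.comp (LinearMap.ker ρ).subtype)) (by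
        intro v
        rw [LinearMap.mem_ker, Matrix.toLin'_apply]
        have h1 := v.1.2
        rw [LinearMap.mem_ker, Matrix.toLin'_apply] at h1
        rw [← h1]
        exact funext (hsplit v.1.1 (hv0 v)))
  have hr : Function.Bijective r := by
    constructor
    · intro v w hvw
      ext q
      by_cases hq : p q
      · exact congrFun (congrArg Subtype.val hvw) ⟨q, hq⟩
      · obtain ⟨t, rfl⟩ := (hκ q).mp hq
        rw [hv0, hv0]
    · rintro ⟨w, hw⟩
      let v : σ → K := fun q => if h : p q then w ⟨q, h⟩ else 0
      have hvκ : ∀ t, v (κ t) = 0 := fun t => dif_neg ((hκ _).mpr ⟨t, rfl⟩)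
      have hvw : (fun q : {q // p q} => v q) = w := by
        ext q
        exact dif_pos q.2
      have hv : v ∈ LinearMap.ker (Matrix.toLin' M) := by
        rw [LinearMap.mem_ker, Matrix.toLin'_apply] at hw ⊢
        rw [← hw, ← hvw]
        exact (funext (hsplit v hvκ)).symm
      exact ⟨⟨⟨v, hv⟩, funext hvκ⟩, Subtype.ext hvw⟩
  rw [← (LinearEquiv.ofBijective r hr).finrank_eq, ← hrange]
  exact LinearMap.finrank_range_add_finrank_ker ρ

omit [CharZero k] in
/-- The chain rule. -/
lemma derivation_aeval {σ : Type*} [Fintype σ] (D : Derivation k K K) (y : σ → K)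
    (f : MvPolynomial σ k) :
    D (MvPolynomial.aeval y f) =
      ∑ q, MvPolynomial.aeval y (MvPolynomial.pderiv q f) * D (y q) := by
  classical
  induction f using MvPolynomial.induction_on with
  | C a => simp
  | add f g hf hg => simp [hf, hg, add_mul, Finset.sum_add_distrib]
  | mul_X f i hf =>
    simp only [map_mul, MvPolynomial.aeval_X, Derivation.leibniz, hf, smul_eq_mul,
      MvPolynomial.pderiv_X, map_add, add_mul, Finset.sum_add_distrib, Finset.mul_sum]
    congr 1
    · simp [Pi.single_apply, apply_ite (MvPolynomial.aeval y)]
    · exact Finset.sum_congr rfl fun q _ => by ring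

omit [CharZero k] in
lemma IsFamBasis.map {A σ : Type*} [CommRing A] [IsDomain A] [Algebra k A] {x : σ → A} {B : Set σ}
    (hB : IsFamBasis k x B) (f : A →ₐ[k] K) (hf : Function.Injective f) :
    IsFamBasis k (fun q => f (x q)) B :=
  ⟨hB.indep.map' hf, fun q => isAlgebraic_map f hf (hB.alg q) (by rw [Set.image_image])⟩

end main

/-! ### The Jacobian matrix and the coordinate ring -/

section core
open Filter Topology
variable {ι : Type*} [Fintype ι] [DecidableEq ι] {n : ι → ℕ}

omit [Fintype ι] [DecidableEq ι] in
lemma continuous_flat : Continuous (flat : APt n → _) :=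
  continuous_pi fun q => (continuous_apply q.2).comp (continuous_apply q.1)

variable {R : Type*} [CommRing R] [Algebra ℂ R]

/-- The point of affine space with coordinates `x` determined by a `ℂ`-point of the ring. -/
def toPt (x : ((i : ι) × Fin (n i)) → R) (φ : R →ₐ[ℂ] ℂ) : APt n := fun i a => φ (x ⟨i, a⟩)

omit [Fintype ι] [DecidableEq ι] in
lemma toPt_mem (x : ((i : ι) × Fin (n i)) → R) (φ : R →ₐ[ℂ] ℂ) : toPt x φ ∈ ptSet x :=
  ⟨φ, fun _ _ => rfl⟩

omit [Fintype ι] [DecidableEq ι] in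
lemma exists_eq_toPt {x : ((i : ι) × Fin (n i)) → R} {p : APt n} (hp : p ∈ ptSet x) :
    ∃ φ, p = toPt x φ := by
  obtain ⟨φ, h⟩ := hp
  exact ⟨φ, funext fun i => funext fun a => h i a⟩

omit [Fintype ι] [DecidableEq ι] in
lemma eval_toPt (x : ((i : ι) × Fin (n i)) → R) (φ : R →ₐ[ℂ] ℂ)
    (f : MvPolynomial ((i : ι) × Fin (n i)) ℂ) :
    MvPolynomial.eval (flat (toPt x φ)) f = φ (MvPolynomial.aeval x f) := by
  have h : φ.comp (MvPolynomial.aeval x) = MvPolynomial.aeval (flat (toPt x φ)) := by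
    ext q
    simp [toPt, flat]
  have := DFunLike.congr_fun h f
  rw [AlgHom.comp_apply, MvPolynomial.aeval_eq_eval] at this
  exact this.symm

omit [Fintype ι] [DecidableEq ι] in
lemma image_ptSet (x : ((i : ι) × Fin (n i)) → R) (I : Finset ι) :
    (fun (p : APt n) (i : {j // j ∈ I}) => p i.1) '' ptSet x =
      ptSet (n := fun i : {j // j ∈ I} => n i.1) (fun q => x ⟨q.1.1, q.2⟩) := by
  ext p
  constructor
  · rintro ⟨p, ⟨φ, h⟩, rfl⟩
    exact ⟨φ, fun i a => h i a⟩
  · rintro ⟨φ, h⟩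
    exact ⟨toPt x φ, toPt_mem x φ, funext fun i => funext fun a => (h i a).symm⟩

/-- The Jacobian matrix with entries in the coordinate ring. -/
noncomputable def jacR {m : ℕ} (F : Fin m → MvPolynomial ((i : ι) × Fin (n i)) ℂ)
    (x : ((i : ι) × Fin (n i)) → R) : Matrix (Fin m) ((i : ι) × Fin (n i)) R :=
  fun a q => MvPolynomial.aeval x (MvPolynomial.pderiv q (F a))

omit [Fintype ι] [DecidableEq ι] in
lemma jac_toPt {m : ℕ} (F : Fin m → MvPolynomial ((i : ι) × Fin (n i)) ℂ)
    (x : ((i : ι) × Fin (n i)) → R) (φ : R →ₐ[ℂ] ℂ) : jac F (toPt x φ) = (jacR F x).map φ := by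
  ext a q
  exact eval_toPt x φ _

omit [Fintype ι] [DecidableEq ι] in
lemma jacCompl_toPt {m : ℕ} (F : Fin m → MvPolynomial ((i : ι) × Fin (n i)) ℂ)
    (x : ((i : ι) × Fin (n i)) → R) (φ : R →ₐ[ℂ] ℂ) (I : Finset ι) :
    jacCompl F (toPt x φ) I = ((jacR F x).submatrix id Subtype.val).map φ := by
  rw [jacCompl, jac_toPt]
  rfl

omit [Fintype ι] [DecidableEq ι] in
/-- Points avoiding a nonzero regular function are dense for the classical topology. -/
lemma ptSet_subset_closure [IsDomain R] [Algebra.FiniteType ℂ R] (x : ((i : ι) × Fin (n i)) → R)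
    {g : R} (hg : g ≠ 0) : ptSet x ⊆ closure {p | ∃ φ : R →ₐ[ℂ] ℂ, φ g ≠ 0 ∧ p = toPt x φ} := by
  intro p hp
  obtain ⟨φ, rfl⟩ := exists_eq_toPt hp
  obtain ⟨l, hl, hne, ht⟩ := exists_tendsto_algHom hg φ
  refine mem_closure_of_tendsto (f := toPt x) (b := l)
    (tendsto_pi_nhds.mpr fun i => tendsto_pi_nhds.mpr fun a => ht _) ?_
  filter_upwards [hne] with ψ hψ
  exact ⟨ψ, hψ, rfl⟩

/-- If `ker DF` has dimension `dim Y` at some point of `Y`, then over the function field the kernel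
of the Jacobian matrix is the space of derivations. -/
lemma derivSpace_eq_ker [IsDomain R] [Algebra.FiniteType ℂ R] {m : ℕ}
    (F : Fin m → MvPolynomial ((i : ι) × Fin (n i)) ℂ) (x : ((i : ι) × Fin (n i)) → R)
    (hF : ∀ a, MvPolynomial.aeval x (F a) = 0)
    (hred : ∃ p ∈ ptSet x, kerDim (jac F p) = dimOf (ptSet x)) :
    derivSpace ℂ (fun q => algebraMap R (FractionRing R) (x q)) =
      LinearMap.ker (Matrix.toLin' ((jacR F x).map (algebraMap R (FractionRing R)))) := by
  let θ : R →ₐ[ℂ] FractionRing R := IsScalarTower.toAlgHom ℂ R (FractionRing R)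
  have hθ : Function.Injective θ := IsFractionRing.injective R (FractionRing R)
  have hev : ∀ f : MvPolynomial ((i : ι) × Fin (n i)) ℂ,
      MvPolynomial.aeval (fun q => algebraMap R (FractionRing R) (x q)) f =
        algebraMap R (FractionRing R) (MvPolynomial.aeval x f) :=
    fun f => MvPolynomial.aeval_algebraMap_apply _ _ _
  obtain ⟨B, hB⟩ := exists_isFamBasis (k := ℂ) x
  apply Submodule.eq_of_le_of_finrank_le
  · intro v hv
    obtain ⟨D, hD⟩ := mem_derivSpace.mp hv
    rw [LinearMap.mem_ker, Matrix.toLin'_apply]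
    ext a
    have h := derivation_aeval D (fun q => algebraMap R (FractionRing R) (x q)) (F a)
    rw [hev, hF, map_zero, map_zero] at h
    simp only [hev, hD] at h
    exact h.symm
  · obtain ⟨p, hp, hdim⟩ := hred
    obtain ⟨φ, rfl⟩ := exists_eq_toPt hp
    rw [dimOf_ptSet x hB, jac_toPt, kerDim] at hdim
    have h1 := finrank_derivSpace (hB.map θ hθ)
    have h2 := finrank_ker_toLin' ((jacR F x).map φ)
    have h3 := finrank_ker_toLin' ((jacR F x).map (algebraMap R (FractionRing R)))
    have h4 := rank_map_le (jacR F x) φ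
    have h5 : Module.finrank (FractionRing R) (LinearMap.ker
        (Matrix.toLin' ((jacR F x).map (algebraMap R (FractionRing R))))) ≤ B.ncard := by omega
    exact h5.trans h1.ge

/-- The dimension formula for a variety given by generators `x` of its coordinate ring. -/
lemma dimProj_ptSet [IsDomain R] [Algebra.FiniteType ℂ R] {m : ℕ}
    (F : Fin m → MvPolynomial ((i : ι) × Fin (n i)) ℂ) (x : ((i : ι) × Fin (n i)) → R)
    (hx : Function.Surjective (MvPolynomial.aeval (R := ℂ) x))
    (hF : ∀ a, MvPolynomial.aeval x (F a) = 0)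
    (hred : ∃ p ∈ ptSet x, kerDim (jac F p) = dimOf (ptSet x)) (I : Finset ι) :
    ∃ U : Set (APt n), IsOpen U ∧ (ptSet x ∩ U).Nonempty ∧ ptSet x ⊆ closure (ptSet x ∩ U) ∧
      ∀ y ∈ ptSet x ∩ U,
        dimProj I (ptSet x) = kerDim (jac F y) - kerDim (jacCompl F y I) := by
  have hker := derivSpace_eq_ker F x hF hred
  let θ : R →ₐ[ℂ] FractionRing R := IsScalarTower.toAlgHom ℂ R (FractionRing R)
  have hθ : Function.Injective θ := IsFractionRing.injective R (FractionRing R)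
  let κ : ((i : {j // j ∈ I}) × Fin (n i.1)) → ((i : ι) × Fin (n i)) := fun q => ⟨q.1.1, q.2⟩
  obtain ⟨B, hB⟩ := exists_isFamBasis (k := ℂ) (x ∘ κ)
  have hproj : dimProj I (ptSet x) = B.ncard := by
    rw [dimProj, image_ptSet]
    exact dimOf_ptSet (n := fun i : {j // j ∈ I} => n i.1) (x ∘ κ) hB
  have hadd := finrank_derivSpace_add hker (fun q => q.1 ∉ I) κ (fun q => by
    rw [not_not]
    constructor
    · exact fun h => ⟨⟨⟨q.1, h⟩, q.2⟩, rfl⟩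
    · rintro ⟨t, rfl⟩
      exact t.1.2)
  have hder := finrank_derivSpace (hB.map θ hθ)
  obtain ⟨s₁, hs₁, h₁⟩ := exists_rank_map_eq (jacR F x)
  obtain ⟨s₂, hs₂, h₂⟩ := exists_rank_map_eq ((jacR F x).submatrix id
    (Subtype.val : {q : (i : ι) × Fin (n i) // q.1 ∉ I} → _))
  obtain ⟨G, hG⟩ := hx (s₁ * s₂)
  have hcl : ptSet x ⊆ closure (ptSet x ∩ {y | MvPolynomial.eval (flat y) G ≠ 0}) := by
    refine (ptSet_subset_closure x (mul_ne_zero hs₁ hs₂)).trans (closure_mono ?_)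
    rintro _ ⟨φ, hφ, rfl⟩
    refine ⟨toPt_mem x φ, ?_⟩
    rwa [Set.mem_ofPred_eq, eval_toPt, hG]
  refine ⟨{y | MvPolynomial.eval (flat y) G ≠ 0}, ?_, ?_, hcl, ?_⟩
  · exact isOpen_ne_fun ((MvPolynomial.continuous_eval G).comp continuous_flat) continuous_const
  · obtain ⟨p, hp, -⟩ := hred
    exact closure_nonempty_iff.mp ⟨p, hcl hp⟩
  · rintro y ⟨hy, hyG⟩
    obtain ⟨φ, rfl⟩ := exists_eq_toPt hy
    rw [Set.mem_ofPred_eq, eval_toPt, hG, map_mul] at hyG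
    have e₁ := h₁ φ (left_ne_zero_of_mul hyG)
    have e₂ := h₂ φ (right_ne_zero_of_mul hyG)
    rw [hproj, jac_toPt, jacCompl_toPt, kerDim, kerDim]
    have k₁ := finrank_ker_toLin' ((jacR F x).map φ)
    have k₂ := finrank_ker_toLin' ((jacR F x).map (algebraMap R (FractionRing R)))
    have k₃ := finrank_ker_toLin' (((jacR F x).submatrix id
      (Subtype.val : {q : (i : ι) × Fin (n i) // q.1 ∉ I} → _)).map φ)
    have k₄ := finrank_ker_toLin' (((jacR F x).submatrix id
      (Subtype.val : {q : (i : ι) × Fin (n i) // q.1 ∉ I} → _)).map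
        (algebraMap R (FractionRing R)))
    rw [Matrix.submatrix_map] at hadd
    replace hadd := (congrArg₂ (· + ·) hder.symm rfl).trans hadd
    omega

end core

section coordinateRing
variable {ι : Type*} {n : ι → ℕ}

/-- The ideal of polynomials vanishing on `Y`. -/
def vanIdeal (Y : Set (APt n)) : Ideal (MvPolynomial ((i : ι) × Fin (n i)) ℂ) where
  carrier := {f | ∀ y ∈ Y, MvPolynomial.eval (flat y) f = 0}
  add_mem' hf hg y hy := by rw [map_add, hf y hy, hg y hy, add_zero]
  zero_mem' _ _ := map_zero _
  smul_mem' c f hf y hy := by rw [smul_eq_mul, map_mul, hf y hy, mul_zero]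

lemma mem_vanIdeal {Y : Set (APt n)} {f : MvPolynomial ((i : ι) × Fin (n i)) ℂ} :
    f ∈ vanIdeal Y ↔ ∀ y ∈ Y, MvPolynomial.eval (flat y) f = 0 := Iff.rfl

lemma isPrime_vanIdeal {Y : Set (APt n)} (hY : IsIrredVariety Y) : (vanIdeal Y).IsPrime := by
  obtain ⟨-, ⟨y, hy⟩, hirr⟩ := hY
  refine ⟨fun h => ?_, fun {f g} hfg => ?_⟩
  · have h1 := mem_vanIdeal.mp ((Ideal.eq_top_iff_one _).mp h) y hy
    rw [map_one] at h1
    exact one_ne_zero h1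
  · refine hirr {y | ∀ h ∈ ({f} : Set (MvPolynomial _ ℂ)), MvPolynomial.eval (flat y) h = 0}
      {y | ∀ h ∈ ({g} : Set (MvPolynomial _ ℂ)), MvPolynomial.eval (flat y) h = 0}
      ⟨_, rfl⟩ ⟨_, rfl⟩ (fun z hz => ?_) |>.imp ?_ ?_
    · have h1 := mem_vanIdeal.mp hfg z hz
      rw [map_mul, mul_eq_zero] at h1
      simpa using h1
    · exact fun h z hz => h hz f rfl
    · exact fun h z hz => h hz g rfl

/-- The coordinate functions generating the coordinate ring of `Y`. -/
noncomputable def coordFn (Y : Set (APt n)) (q : (i : ι) × Fin (n i)) :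
    MvPolynomial ((i : ι) × Fin (n i)) ℂ ⧸ vanIdeal Y :=
  Ideal.Quotient.mkₐ ℂ (vanIdeal Y) (MvPolynomial.X q)

lemma aeval_coordFn (Y : Set (APt n)) (f : MvPolynomial ((i : ι) × Fin (n i)) ℂ) :
    MvPolynomial.aeval (coordFn Y) f = Ideal.Quotient.mkₐ ℂ (vanIdeal Y) f := by
  have h : MvPolynomial.aeval (coordFn Y) = Ideal.Quotient.mkₐ ℂ (vanIdeal Y) := by
    ext q
    simp [coordFn]
  rw [h]

/-- An algebraic set is recovered from the `ℂ`-points of its coordinate ring. -/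
lemma ptSet_coordFn {Y : Set (APt n)} (hY : IsAlgebraicSet Y) : ptSet (coordFn Y) = Y := by
  ext p
  constructor
  · intro hp
    obtain ⟨φ, rfl⟩ := exists_eq_toPt hp
    obtain ⟨E, hE⟩ := hY
    have hmem : ∀ f ∈ E, f ∈ vanIdeal Y := fun f hf y hy => by
      rw [hE] at hy
      exact hy f hf
    refine hE.ge fun f hf => ?_
    rw [eval_toPt, aeval_coordFn, Ideal.Quotient.mkₐ_eq_mk,
      Ideal.Quotient.eq_zero_iff_mem.mpr (hmem f hf), map_zero]
  · intro hp
    refine ⟨Ideal.Quotient.liftₐ (vanIdeal Y) (MvPolynomial.aeval (flat p)) fun f hf => ?_,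
      fun i a => ?_⟩
    · rw [MvPolynomial.aeval_eq_eval]
      exact hf p hp
    · simp [coordFn, flat]

end coordinateRing

/-- For an irreducible component `Y` of `V(F)` in multiaffine space,
reduced along `Y`, and any subset `I` of the variable groups, at a general smooth
point `y` of `Y` one has
`dim π_I(Y) = dim ker DF(y) − dim ker DF_{Iᶜ}(y)`. -/
theorem dimProj_eq_kerDim_sub {n : ι → ℕ} {m : ℕ}
    (F : Fin m → MvPolynomial ((i : ι) × Fin (n i)) ℂ)
    (Y : Set (APt n)) (hY : IsIrredVariety Y)
    (hYF : Y ⊆ {x | ∀ a, MvPolynomial.eval (flat x) (F a) = 0})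
    (hcomp : ∀ Z : Set (APt n), IsIrredVariety Z → Y ⊆ Z →
      Z ⊆ {x | ∀ a, MvPolynomial.eval (flat x) (F a) = 0} → Z = Y)
    (hred : ∃ x ∈ Y, kerDim (jac F x) = dimOf Y)
    (I : Finset ι) :
    ∃ U : Set (APt n), IsOpen U ∧ (Y ∩ U).Nonempty ∧ Y ⊆ closure (Y ∩ U) ∧
      ∀ y ∈ Y ∩ U, dimProj I Y = kerDim (jac F y) - kerDim (jacCompl F y I) := by
  have := isPrime_vanIdeal hY
  have hpt := ptSet_coordFn hY.1
  have hx : Function.Surjective (MvPolynomial.aeval (R := ℂ) (coordFn Y)) := fun r => by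
    obtain ⟨f, rfl⟩ := Ideal.Quotient.mkₐ_surjective ℂ (vanIdeal Y) r
    exact ⟨f, aeval_coordFn Y f⟩
  have hF : ∀ a, MvPolynomial.aeval (coordFn Y) (F a) = 0 := fun a => by
    rw [aeval_coordFn, Ideal.Quotient.mkₐ_eq_mk, Ideal.Quotient.eq_zero_iff_mem]
    exact fun y hy => hYF hy a
  have key := dimProj_ptSet F (coordFn Y) hx hF (by rwa [hpt]) I
  rwa [hpt] at key

end MultiAff
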